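/- arXiv:1712.02580 — 2 statements merged into one kernel-verified Lean document; each statement's English description precedes it below -/
import Mathlib

section
/- Let T be the unilateral forward shift on the complex Hilbert space ℓ²(ℕ), i.e. the bounded linear operator with T(x₁, x₂, x₃, …) = (0, x₁, x₂, …). Then S_LY(T) = ∅; that is, λ·I + T is not Li-Yorke chaotic for any λ ∈ ℂ. -/
/-!
The shift is an isometry, so `T* T = 1`, while `T T*` is a projection; hence `T T* ≤ T* T`, that is,
`T` is hyponormal. Hyponormality only involves the commutator of `T` and `T*`, so it survives adding
a scalar. Hyponormal operators are paranormal, so along each orbit the norms form a log-convex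
sequence. Such a sequence is either nonincreasing, and then it converges, or eventually
nondecreasing and bounded away from `0`. In neither case is its lower limit `0` while its upper
limit is positive.
-/

open Filter

noncomputable section

/-- A bounded linear operator `T` is Li-Yorke chaotic if it admits an uncountable scrambled
set `Γ`: for every pair of distinct points `x, y ∈ Γ`,
`limsup ‖Tⁿx − Tⁿy‖ > 0` and `liminf ‖Tⁿx − Tⁿy‖ = 0`. -/
def LiYorkeChaotic {X : Type*} [NormedAddCommGroup X] [NormedSpace ℂ X]
    (T : X →L[ℂ] X) : Prop :=
  ∃ Γ : Set X, ¬ Γ.Countable ∧ ∀ x ∈ Γ, ∀ y ∈ Γ, x ≠ y →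
    0 < Filter.atTop.limsup (fun n => (‖(T ^ n) x - (T ^ n) y‖₊ : ENNReal)) ∧
    Filter.atTop.liminf (fun n => (‖(T ^ n) x - (T ^ n) y‖₊ : ENNReal)) = 0

/-- The Li-Yorke chaos translation set of `T`:
`S_LY(T) = {λ ∈ ℂ : λ·I + T is Li-Yorke chaotic}`. -/
def SLY {X : Type*} [NormedAddCommGroup X] [NormedSpace ℂ X]
    (T : X →L[ℂ] X) : Set ℂ :=
  {z : ℂ | LiYorkeChaotic (z • (1 : X →L[ℂ] X) + T)}

section LogConvex

variable {R : Type*} [Semiring R] [LinearOrder R] [IsStrictOrderedRing R] {a : ℕ → R}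

lemma monotone_add_of_sq_le_mul (ha₀ : ∀ n, 0 ≤ a n)
    (ha : ∀ n, a (n + 1) ^ 2 ≤ a n * a (n + 2)) {N : ℕ} (hN : 0 < a N)
    (hle : a N ≤ a (N + 1)) : Monotone fun k => a (N + k) := by
  have increasing_above : ∀ k, a N ≤ a (N + k) ∧ a (N + k) ≤ a (N + k + 1) := by
    intro k
    induction k with
    | zero => exact ⟨le_rfl, hle⟩
    | succ k ih =>
      obtain ⟨above, step⟩ := ih
      have pos : 0 < a (N + k + 1) := hN.trans_le (above.trans step)
      refine ⟨above.trans step, le_of_mul_le_mul_left ?_ pos⟩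
      calc a (N + k + 1) * a (N + k + 1) = a (N + k + 1) ^ 2 := (sq _).symm
        _ ≤ a (N + k) * a (N + k + 2) := ha (N + k)
        _ ≤ a (N + k + 1) * a (N + k + 2) := mul_le_mul_of_nonneg_right step (ha₀ _)
  exact monotone_nat_of_le_succ fun k => (increasing_above k).2

lemma antitone_or_monotone_add_of_sq_le_mul (ha₀ : ∀ n, 0 ≤ a n)
    (ha : ∀ n, a (n + 1) ^ 2 ≤ a n * a (n + 2)) :
    Antitone a ∨ ∃ N, 0 < a N ∧ Monotone fun k => a (N + k) := by
  by_cases! hup : ∃ N, 0 < a N ∧ a N ≤ a (N + 1)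
  · obtain ⟨N, hN, hle⟩ := hup
    exact .inr ⟨N, hN, monotone_add_of_sq_le_mul ha₀ ha hN hle⟩
  · refine .inl (antitone_nat_of_succ_le fun n => ?_)
    rcases (ha₀ n).eq_or_lt with hzero | hpos
    · have hsq : a (n + 1) ^ 2 ≤ 0 := by simpa only [← hzero, zero_mul] using ha n
      have hle : a (n + 1) ≤ 0 := not_lt.mp fun hpos => (pow_pos hpos 2).not_ge hsq
      exact hle.trans_eq hzero
    · exact (hup n hpos).le

end LogConvex

lemma limsup_eq_zero_of_liminf_eq_zero_of_sq_le_mul {a : ℕ → NNReal}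
    (ha : ∀ n, a (n + 1) ^ 2 ≤ a n * a (n + 2))
    (hinf : atTop.liminf (fun n => (a n : ENNReal)) = 0) :
    atTop.limsup (fun n => (a n : ENNReal)) = 0 := by
  rcases antitone_or_monotone_add_of_sq_le_mul (fun _ => zero_le) ha with hanti | ⟨N, hN, hmono⟩
  · have hlim := tendsto_atTop_iInf (ENNReal.coe_mono.comp_antitone hanti)
    exact hlim.limsup_eq.trans (hlim.liminf_eq.symm.trans hinf)
  · have hbound : (a N : ENNReal) ≤ atTop.liminf fun n => (a n : ENNReal) := by
      refine le_liminf_of_le (by isBoundedDefault) ?_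
      filter_upwards [eventually_ge_atTop N] with n hn
      obtain ⟨k, rfl⟩ := Nat.exists_eq_add_of_le hn
      exact ENNReal.coe_le_coe.mpr (hmono k.zero_le)
    exact absurd (hinf ▸ hbound) (ENNReal.coe_pos.mpr hN).not_ge

/-- A bounded operator is paranormal if `‖T x‖² ≤ ‖x‖ ‖T² x‖` for every vector `x`, not only for
unit vectors, so that the condition applies directly along orbits. -/
def IsParanormal {𝕜 X : Type*} [NormedField 𝕜] [NormedAddCommGroup X] [NormedSpace 𝕜 X]
    (T : X →L[𝕜] X) : Prop :=
  ∀ x, ‖T x‖ ^ 2 ≤ ‖x‖ * ‖T (T x)‖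

namespace IsParanormal

lemma nnnorm_pow_sq_le {𝕜 X : Type*} [NormedField 𝕜] [NormedAddCommGroup X] [NormedSpace 𝕜 X]
    {T : X →L[𝕜] X} (hT : IsParanormal T) (x : X) (n : ℕ) :
    ‖(T ^ (n + 1)) x‖₊ ^ 2 ≤ ‖(T ^ n) x‖₊ * ‖(T ^ (n + 2)) x‖₊ := by
  rw [pow_succ' T (n + 1), pow_succ' T n]
  exact hT ((T ^ n) x)

theorem not_liYorkeChaotic {X : Type*} [NormedAddCommGroup X] [NormedSpace ℂ X]
    {T : X →L[ℂ] X} (hT : IsParanormal T) : ¬ LiYorkeChaotic T := by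
  rintro ⟨Γ, huncountable, hscrambled⟩
  have hnontrivial : Γ.Nontrivial :=
    Set.not_subsingleton_iff.mp fun h => huncountable h.countable
  obtain ⟨x, hx, y, hy, hxy⟩ := hnontrivial
  obtain ⟨hsup, hinf⟩ := hscrambled x hx y hy hxy
  simp only [← map_sub] at hsup hinf
  exact hsup.ne' (limsup_eq_zero_of_liminf_eq_zero_of_sq_le_mul (hT.nnnorm_pow_sq_le (x - y)) hinf)

end IsParanormal

/-- An element of an ordered star algebra is hyponormal if its self-commutator `a* a - a a*` is
nonnegative. For operators on a Hilbert space the order is the Loewner order. -/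
def IsHyponormal {A : Type*} [Mul A] [Star A] [LE A] (a : A) : Prop :=
  a * star a ≤ star a * a

namespace IsHyponormal

theorem of_star_mul_self_eq_one {A : Type*} [Ring A] [PartialOrder A] [StarRing A]
    [StarOrderedRing A] {a : A} (ha : star a * a = 1) : IsHyponormal a := by
  have hproj : IsStarProjection (a * star a) :=
    { isIdempotentElem := by
        rw [IsIdempotentElem, mul_assoc, ← mul_assoc (star a), ha, one_mul]
      isSelfAdjoint := .mul_star_self a }
  exact hproj.le_one.trans_eq ha.symm

theorem smul_one_add {R A : Type*} [CommSemiring R] [StarRing R] [Semiring A] [PartialOrder A]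
    [IsOrderedAddMonoid A] [StarRing A] [Algebra R A] [StarModule R A] {a : A}
    (ha : IsHyponormal a) (c : R) : IsHyponormal (c • 1 + a) := by
  let common : A := (c * star c) • 1 + c • star a + star c • a
  calc (c • 1 + a) * star (c • 1 + a) = common + a * star a := by
        simp only [common, star_add, star_smul, star_one, add_mul, mul_add, smul_add,
          smul_mul_assoc, mul_smul_comm, one_mul, mul_one, smul_smul, mul_comm c]
        abel
    _ ≤ common + star a * a := by gcongr; exact ha
    _ = star (c • 1 + a) * (c • 1 + a) := by
        simp only [common, star_add, star_smul, star_one, add_mul, mul_add, smul_add,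
          smul_mul_assoc, mul_smul_comm, one_mul, mul_one, smul_smul, mul_comm c]
        abel

section Operator

variable {𝕜 H : Type*} [RCLike 𝕜] [NormedAddCommGroup H] [InnerProductSpace 𝕜 H] [CompleteSpace H]
  {T : H →L[𝕜] H}

lemma norm_adjoint_apply_le (hT : IsHyponormal T) (x : H) :
    ‖ContinuousLinearMap.adjoint T x‖ ≤ ‖T x‖ := by
  have hinner := (ContinuousLinearMap.le_def _ _).mp hT |>.re_inner_nonneg_left x
  rw [sub_apply, inner_sub_left, map_sub, sub_nonneg] at hinner
  have hsq : ‖ContinuousLinearMap.adjoint T x‖ ^ 2 ≤ ‖T x‖ ^ 2 := by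
    rw [ContinuousLinearMap.apply_norm_sq_eq_inner_adjoint_left,
      ContinuousLinearMap.apply_norm_sq_eq_inner_adjoint_left,
      ContinuousLinearMap.adjoint_adjoint]
    exact hinner
  exact le_of_sq_le_sq hsq (norm_nonneg _)

theorem isParanormal (hT : IsHyponormal T) : IsParanormal T := by
  intro x
  calc ‖T x‖ ^ 2 = RCLike.re (inner 𝕜 x (ContinuousLinearMap.adjoint T (T x))) :=
        T.apply_norm_sq_eq_inner_adjoint_right x
    _ ≤ ‖x‖ * ‖ContinuousLinearMap.adjoint T (T x)‖ := re_inner_le_norm _ _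
    _ ≤ ‖x‖ * ‖T (T x)‖ := by gcongr; exact hT.norm_adjoint_apply_le (T x)

end Operator

end IsHyponormal

lemma lp_norm_eq_of_shift {E : Type*} [NormedAddCommGroup E] {p : ENNReal} (hp : 0 < p.toReal)
    {x y : lp (fun _ : ℕ => E) p} (hzero : (y : ℕ → E) 0 = 0)
    (hsucc : ∀ n, (y : ℕ → E) (n + 1) = (x : ℕ → E) n) : ‖y‖ = ‖x‖ := by
  have htsum : ∑' n, ‖(y : ℕ → E) n‖ ^ p.toReal = ∑' n, ‖(x : ℕ → E) n‖ ^ p.toReal := by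
    rw [((lp.memℓp y).summable hp).tsum_eq_zero_add]
    simp only [hzero, hsucc, norm_zero, Real.zero_rpow hp.ne', zero_add]
  rw [lp.norm_eq_tsum_rpow hp, lp.norm_eq_tsum_rpow hp, htsum]

theorem SLY_shift_eq_empty_general {H : Type*} [NormedAddCommGroup H] [InnerProductSpace ℂ H]
    [CompleteSpace H] {T : H →L[ℂ] H} (hT : IsHyponormal T) : SLY T = ∅ :=
  Set.eq_empty_of_forall_notMem fun z => (hT.smul_one_add z).isParanormal.not_liYorkeChaotic

theorem SLY_shift_eq_empty
    (T : lp (fun _ : ℕ => ℂ) 2 →L[ℂ] lp (fun _ : ℕ => ℂ) 2)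
    (hT : ∀ x : lp (fun _ : ℕ => ℂ) 2,
      (T x : ℕ → ℂ) 0 = 0 ∧ ∀ n : ℕ, (T x : ℕ → ℂ) (n + 1) = (x : ℕ → ℂ) n) :
    SLY T = ∅ := by
  have norm_shift (x) : ‖T x‖ = ‖x‖ := lp_norm_eq_of_shift (by norm_num) (hT x).1 (hT x).2
  have adjoint_mul_self : star T * T = 1 := T.norm_map_iff_adjoint_comp_self.mp norm_shift
  exact SLY_shift_eq_empty_general (.of_star_mul_self_eq_one adjoint_mul_self)
end
end

section
/- Let T be the unilateral forward weighted shift on ℓ²(ℕ) with weight sequence (ωₙ)_{n≥1}, i.e. T(x₁, x₂, x₃, …) = (0, ω₁x₁, ω₂x₂, …), where ωₙ ≠ 0 for all n and ωₙ → 0 as n → ∞, and assume T is compact and quasinilpotent (its spectral radius is 0). Then S_LY(T) = ∅; that is, λ·I + T is not Li-Yorke chaotic for any λ ∈ ℂ. -/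
open Filter

noncomputable section

/-!
Li-Yorke chaos of `z • 1 + T` would give a vector `v ≠ 0` whose orbit accumulates at `0` without
converging to it. If `‖z‖ < 1`, the spectral radius of `z • 1 + T` is less than `1`, so all orbits
tend to `0`. If `1 ≤ ‖z‖`, let `m` be the position of the first nonzero coordinate of `v`; as `T` is
strictly lower triangular, the `m`-th coordinate of `(z • 1 + T) ^ n v` is `z ^ n * v m`, so the
orbit stays away from `0`.
-/

lemma spectralRadius_smul_one_add_le {𝕜 A : Type*} [NormedField 𝕜] [Ring A] [Algebra 𝕜 A]
    (z : 𝕜) (a : A) : spectralRadius 𝕜 (z • 1 + a) ≤ ‖z‖ₑ + spectralRadius 𝕜 a := by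
  refine iSup₂_le fun k hk ↦ ?_
  rw [← Algebra.algebraMap_eq_smul_one, ← spectrum.singleton_add_eq, Set.singleton_add] at hk
  obtain ⟨w, hw, rfl⟩ := hk
  calc ‖z + w‖ₑ ≤ ‖z‖ₑ + ‖w‖ₑ := enorm_add_le z w
    _ ≤ ‖z‖ₑ + spectralRadius 𝕜 a := by
      gcongr
      exact le_iSup₂ (f := fun (k : 𝕜) (_ : k ∈ spectrum 𝕜 a) ↦ ‖k‖ₑ) w hw

lemma tendsto_pow_atTop_nhds_zero_of_spectralRadius_lt_one {A : Type*} [NormedRing A]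
    [NormedAlgebra ℂ A] [CompleteSpace A] {a : A} (ha : spectralRadius ℂ a < 1) :
    Tendsto (fun n ↦ a ^ n) atTop (nhds 0) := by
  obtain ⟨r, har, hr⟩ := exists_between ha
  have enorm_pow_le : ∀ᶠ n in atTop, ‖a ^ n‖ₑ ≤ r ^ n := by
    filter_upwards [(spectrum.gelfand_formula a).eventually_lt_const har, eventually_gt_atTop 0]
      with n hn hn0
    rw [one_div, ENNReal.rpow_inv_lt_iff (by exact_mod_cast hn0), ENNReal.rpow_natCast] at hn
    exact hn.le
  exact tendsto_zero_iff_enorm_tendsto_zero.2 <|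
    tendsto_of_tendsto_of_tendsto_of_le_of_le' tendsto_const_nhds
      (ENNReal.tendsto_pow_atTop_nhds_zero_of_lt_one hr) (.of_forall fun _ ↦ zero_le) enorm_pow_le

section SemiIrregular

variable {X : Type*} [NormedAddCommGroup X] [NormedSpace ℂ X] {T : X →L[ℂ] X} {v : X}

/-- A vector is semi-irregular for `T` if its orbit accumulates at `0` without converging to `0`.
These vectors are the differences of the points of a scrambled set. -/
def IsSemiIrregular (T : X →L[ℂ] X) (v : X) : Prop :=
  0 < atTop.limsup (fun n ↦ ‖(T ^ n) v‖ₑ) ∧ atTop.liminf (fun n ↦ ‖(T ^ n) v‖ₑ) = 0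

lemma LiYorkeChaotic.exists_isSemiIrregular (hT : LiYorkeChaotic T) :
    ∃ v ≠ 0, IsSemiIrregular T v := by
  obtain ⟨Γ, hΓ, hpair⟩ := hT
  obtain ⟨x, hx, y, hy, hxy⟩ : Γ.Nontrivial :=
    Set.not_subsingleton_iff.1 fun hsub ↦ hΓ hsub.countable
  refine ⟨x - y, sub_ne_zero.2 hxy, ?_⟩
  simpa only [IsSemiIrregular, map_sub, enorm_eq_nnnorm] using hpair x hx y hy hxy

lemma not_isSemiIrregular_of_spectralRadius_lt_one [CompleteSpace X]
    (hT : spectralRadius ℂ T < 1) : ¬ IsSemiIrregular T v := by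
  intro hv
  have orbit_tendsto : Tendsto (fun n ↦ (T ^ n) v) atTop (nhds 0) := by
    simpa only [Function.comp_def, map_zero, ContinuousLinearMap.apply_apply] using
      ((ContinuousLinearMap.apply ℂ X v).continuous.tendsto 0).comp
        (tendsto_pow_atTop_nhds_zero_of_spectralRadius_lt_one hT)
  exact hv.1.ne' (tendsto_zero_iff_enorm_tendsto_zero.1 orbit_tendsto).limsup_eq

lemma not_isSemiIrregular_of_forall_le_norm {c : ℝ} (hc : 0 < c) (hv : ∀ n, c ≤ ‖(T ^ n) v‖) :
    ¬ IsSemiIrregular T v := by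
  intro hirr
  have c_le_liminf : ENNReal.ofReal c ≤ atTop.liminf (fun n ↦ ‖(T ^ n) v‖ₑ) :=
    le_liminf_of_le (by isBoundedDefault) <| .of_forall fun n ↦ by
      simpa only [ofReal_norm] using ENNReal.ofReal_le_ofReal (hv n)
  rw [hirr.2] at c_le_liminf
  exact (ENNReal.ofReal_pos.2 hc).not_ge c_le_liminf

end SemiIrregular

section StrictlyLowerTriangular

variable {𝕜 X ι : Type*} [NontriviallyNormedField 𝕜] [NormedAddCommGroup X] [NormedSpace 𝕜 X]
  [Preorder ι] {F : ι → Type*} [∀ i, NormedAddCommGroup (F i)] [∀ i, NormedSpace 𝕜 (F i)]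
  {φ : ∀ i, X →L[𝕜] F i} {T : X →L[𝕜] X} {x : X} {i : ι}

/-- `T` is strictly lower triangular with respect to the coordinate maps `φ i`: the `i`-th
coordinate of `T x` vanishes whenever all coordinates of `x` of index `< i` do. The coordinates may
be vector-valued, so that block triangular operators are included. -/
def IsStrictlyLowerTriangular (φ : ∀ i, X →L[𝕜] F i) (T : X →L[𝕜] X) : Prop :=
  ∀ i x, (∀ j < i, φ j x = 0) → φ i (T x) = 0

namespace IsStrictlyLowerTriangular

lemma apply_smul_one_add (hT : IsStrictlyLowerTriangular φ T) (z : 𝕜)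
    (hx : ∀ j < i, φ j x = 0) : φ i ((z • 1 + T) x) = z • φ i x := by
  simp only [add_apply, smul_apply, one_apply_eq_self, map_add, map_smul, hT i x hx, add_zero]

lemma apply_smul_one_add_pow (hT : IsStrictlyLowerTriangular φ T) (z : 𝕜)
    (hx : ∀ j < i, φ j x = 0) (n : ℕ) :
    ∀ j ≤ i, φ j (((z • 1 + T) ^ n) x) = z ^ n • φ j x := by
  induction n with
  | zero => simp
  | succ n ih =>
    intro j hj
    have lower_coords_eq_zero : ∀ k < j, φ k (((z • 1 + T) ^ n) x) = 0 := fun k hk ↦ by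
      rw [ih k (hk.le.trans hj), hx k (hk.trans_le hj), smul_zero]
    rw [pow_succ', mul_apply_eq_comp, hT.apply_smul_one_add z lower_coords_eq_zero,
      ih j hj, smul_smul, ← pow_succ']

lemma exists_pos_forall_mul_pow_le [WellFoundedLT ι] (hT : IsStrictlyLowerTriangular φ T)
    (hx : ∃ i, φ i x ≠ 0) (z : 𝕜) :
    ∃ c > 0, ∀ n, c * ‖z‖ ^ n ≤ ‖((z • 1 + T) ^ n) x‖ := by
  obtain ⟨m, hm, hmin⟩ := exists_minimal_of_wellFoundedLT (fun i ↦ φ i x ≠ 0) hx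
  have hlt : ∀ j < m, φ j x = 0 := fun j hj ↦ by_contra fun hne ↦ hj.not_ge (hmin hne hj.le)
  have norm_φ_pos : 0 < ‖φ m‖ := norm_pos_iff.2 fun h ↦ hm (by simp [h])
  refine ⟨‖φ m x‖ / ‖φ m‖, div_pos (norm_pos_iff.2 hm) norm_φ_pos, fun n ↦ ?_⟩
  rw [div_mul_eq_mul_div, div_le_iff₀' norm_φ_pos]
  calc ‖φ m x‖ * ‖z‖ ^ n = ‖φ m (((z • 1 + T) ^ n) x)‖ := by
        rw [hT.apply_smul_one_add_pow z hlt n m le_rfl, norm_smul, norm_pow, mul_comm]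
    _ ≤ ‖φ m‖ * ‖((z • 1 + T) ^ n) x‖ := (φ m).le_opNorm _

end IsStrictlyLowerTriangular

lemma isStrictlyLowerTriangular_of_weighted_shift {E : Type*} [NormedAddCommGroup E]
    [NormedSpace 𝕜 E] {p : ENNReal} [Fact (1 ≤ p)] {ω : ℕ → 𝕜}
    {T : lp (fun _ : ℕ ↦ E) p →L[𝕜] lp (fun _ : ℕ ↦ E) p}
    (hT : ∀ x, T x 0 = 0 ∧ ∀ n, T x (n + 1) = ω n • x n) :
    IsStrictlyLowerTriangular (lp.evalCLM 𝕜 (fun _ : ℕ ↦ E) p) T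
  | 0, x, _ => (hT x).1
  | n + 1, x, hx => ((hT x).2 n).trans <| by
      rw [show x n = 0 from hx n n.lt_succ_self, smul_zero]

end StrictlyLowerTriangular

theorem SLY_weighted_shift_eq_empty_general {X ι : Type*} [NormedAddCommGroup X]
    [NormedSpace ℂ X] [CompleteSpace X] [Preorder ι] [WellFoundedLT ι] {F : ι → Type*}
    [∀ i, NormedAddCommGroup (F i)] [∀ i, NormedSpace ℂ (F i)] {φ : ∀ i, X →L[ℂ] F i}
    (hφ : ∀ x, (∀ i, φ i x = 0) → x = 0) {T : X →L[ℂ] X} (hT : IsStrictlyLowerTriangular φ T)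
    (hquasi : spectralRadius ℂ T = 0) : SLY T = ∅ := by
  refine Set.eq_empty_of_forall_notMem fun z hz ↦ ?_
  obtain ⟨v, hv, hirr⟩ := LiYorkeChaotic.exists_isSemiIrregular hz
  rcases lt_or_ge ‖z‖ 1 with hz_lt | hz_ge
  · have radius_lt_one : spectralRadius ℂ (z • 1 + T) < 1 :=
      calc spectralRadius ℂ (z • 1 + T) ≤ ‖z‖ₑ := by
            simpa only [hquasi, add_zero] using spectralRadius_smul_one_add_le z T
        _ < 1 := by rwa [← ofReal_norm, ENNReal.ofReal_lt_one]
    exact not_isSemiIrregular_of_spectralRadius_lt_one radius_lt_one hirr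
  · obtain ⟨c, hc, hle⟩ :=
      hT.exists_pos_forall_mul_pow_le (not_forall.1 fun h ↦ hv (hφ v h)) z
    exact not_isSemiIrregular_of_forall_le_norm hc
      (fun n ↦ (le_mul_of_one_le_right hc.le (one_le_pow₀ hz_ge)).trans (hle n)) hirr

theorem SLY_weighted_shift_eq_empty
    (ω : ℕ → ℂ) (hω : ∀ n, ω n ≠ 0) (hω0 : Filter.Tendsto ω Filter.atTop (nhds 0))
    (T : lp (fun _ : ℕ => ℂ) 2 →L[ℂ] lp (fun _ : ℕ => ℂ) 2)
    (hT : ∀ x : lp (fun _ : ℕ => ℂ) 2,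
      (T x : ℕ → ℂ) 0 = 0 ∧ ∀ n : ℕ, (T x : ℕ → ℂ) (n + 1) = ω n * (x : ℕ → ℂ) n)
    (hcompact : IsCompactOperator T)
    (hquasi : spectralRadius ℂ T = 0) :
    SLY T = ∅ :=
  SLY_weighted_shift_eq_empty_general (fun _ hx ↦ lp.ext (funext hx))
    (isStrictlyLowerTriangular_of_weighted_shift hT) hquasi
end
end
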